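/- Let Λ = (Λ_i)_{i∈ℤ} be a g-frame for H with respect to K represented by an invertible bounded operator T : H → H with bounded inverse. Then the kernel of the synthesis operator is invariant under both the right-shift and the left-shift: for every family (g_i)_{i∈ℤ} in K with Σ_{i∈ℤ} ‖g_i‖² < ∞, if Σ_{i∈ℤ} Λ_i*(g_i) = 0 then Σ_{i∈ℤ} Λ_{i+1}*(g_i) = 0 and Σ_{i∈ℤ} Λ_{i−1}*(g_i) = 0. -/

import Mathlib

open ContinuousLinearMap

/-- If a g-frame `Λ = (Λ_i)_{i∈ℤ}` is represented by `T ∈ GL(H)`, then the kernel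
of the synthesis operator is invariant under both the right shift and the left shift. -/
theorem gframe_Z_representation_ker_shift_invariant
    {H K : Type*} [NormedAddCommGroup H] [InnerProductSpace ℂ H] [CompleteSpace H]
    [TopologicalSpace.SeparableSpace H]
    [NormedAddCommGroup K] [InnerProductSpace ℂ K] [CompleteSpace K]
    [TopologicalSpace.SeparableSpace K]
    (Λ : ℤ → (H →L[ℂ] K)) (A B : ℝ) (hA : 0 < A) (hAB : A ≤ B)
    (hsum : ∀ f : H, Summable fun i : ℤ => ‖Λ i f‖ ^ 2)
    (hlow : ∀ f : H, A * ‖f‖ ^ 2 ≤ ∑' i : ℤ, ‖Λ i f‖ ^ 2)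
    (hup : ∀ f : H, ∑' i : ℤ, ‖Λ i f‖ ^ 2 ≤ B * ‖f‖ ^ 2)
    (T : H ≃L[ℂ] H) (hrep : ∀ i : ℤ, Λ (i + 1) = (Λ i).comp (T : H →L[ℂ] H)) :
    ∀ g : ℤ → K, Summable (fun i : ℤ => ‖g i‖ ^ 2) →
      (∑' i : ℤ, ContinuousLinearMap.adjoint (Λ i) (g i)) = 0 →
      (∑' i : ℤ, ContinuousLinearMap.adjoint (Λ (i + 1)) (g i)) = 0 ∧
      (∑' i : ℤ, ContinuousLinearMap.adjoint (Λ (i - 1)) (g i)) = 0 := by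
  intro g _ h0
  have h1 : ∀ x, adjoint (T.symm : H →L[ℂ] H) (adjoint (T : H →L[ℂ] H) x) = x := by
    intro x
    refine ext_inner_right ℂ fun y => ?_
    simp [ContinuousLinearMap.adjoint_inner_left]
  have h2 : ∀ x, adjoint (T : H →L[ℂ] H) (adjoint (T.symm : H →L[ℂ] H) x) = x := by
    intro x
    refine ext_inner_right ℂ fun y => ?_
    simp [ContinuousLinearMap.adjoint_inner_left]
  let e : H ≃L[ℂ] H := ContinuousLinearEquiv.equivOfInverse
    (adjoint (T : H →L[ℂ] H)) (adjoint (T.symm : H →L[ℂ] H)) h1 h2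
  have hR : ∀ i x, adjoint (Λ (i + 1)) x = e (adjoint (Λ i) x) := by
    intro i x
    rw [hrep, ContinuousLinearMap.adjoint_comp]
    rfl
  have hL : ∀ i x, adjoint (Λ (i - 1)) x = e.symm (adjoint (Λ i) x) := by
    intro i x
    have h := hR (i - 1) x
    rw [sub_add_cancel] at h
    rw [h, ContinuousLinearEquiv.symm_apply_apply]
  constructor
  · simp_rw [hR]
    rw [← ContinuousLinearEquiv.map_tsum, h0, map_zero]
  · simp_rw [hL]
    rw [← ContinuousLinearEquiv.map_tsum, h0, map_zero]
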